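/- If 1 ≤ α < 2, then ρ_α(θ) → +∞ as θ → π from the left. If 0 < α < 1, then ρ_α(θ) converges to a finite limit as θ → πα from the left, and this limit is strictly positive. In particular, for every α ∈ (0,2) the function ρ_α takes strictly positive values on [t₀(α), min(π, πα)). -/

import Mathlib

open MeasureTheory Set Filter

/-- `t₀(α) = 2πα/(α+2)`. -/
noncomputable def t0 (α : ℝ) : ℝ := 2 * Real.pi * α / (α + 2)

/-- `Z₀(θ) = (sin t₀(α) / sin θ)^(1/α)`. -/
noncomputable def Z0 (α θ : ℝ) : ℝ := (Real.sin (t0 α) / Real.sin θ) ^ (1 / α)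

/-- The negative `e^{it₀(α)} − e^{iθ}t^α` of the function whose square root is integrated. -/
noncomputable def radicand (α θ t : ℝ) : ℂ :=
  Complex.exp (Complex.I * ((t0 α : ℝ) : ℂ))
    - Complex.exp (Complex.I * (θ : ℂ)) * ((t ^ α : ℝ) : ℂ)

/-- The imaginary part of the square root of `z` in the closed first quadrant, for `0 ≤ z.im`. -/
noncomputable def sqrtIm (z : ℂ) : ℝ := √((‖z‖ - z.re) / 2)

/-- The square root of `-z` in the closed fourth quadrant, for `0 ≤ z.im`. -/
noncomputable def sqrtNeg (z : ℂ) : ℂ := ⟨sqrtIm z, -√((‖z‖ + z.re) / 2)⟩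

lemma continuous_sqrtIm : Continuous sqrtIm := by
  unfold sqrtIm
  fun_prop

lemma continuous_sqrtNeg : Continuous sqrtNeg := by
  have h : sqrtNeg = fun z => (sqrtIm z : ℂ) + ((-√((‖z‖ + z.re) / 2) : ℝ) : ℂ) * Complex.I := by
    funext z
    apply Complex.ext <;> simp [sqrtNeg]
  have := continuous_sqrtIm
  rw [h]
  fun_prop

lemma sqrtNeg_sq {z : ℂ} (hz : 0 ≤ z.im) : sqrtNeg z ^ 2 = -z := by
  have h1 : 0 ≤ (‖z‖ - z.re) / 2 := by linarith [Complex.re_le_norm z]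
  have h2 : 0 ≤ (‖z‖ + z.re) / 2 := by linarith [neg_le_of_abs_le (Complex.abs_re_le_norm z)]
  have h3 : √((‖z‖ - z.re) / 2) * √((‖z‖ + z.re) / 2) = z.im / 2 := by
    rw [← Real.sqrt_mul h1]
    refine (Real.sqrt_eq_iff_mul_self_eq (mul_nonneg h1 h2) (by linarith)).2 ?_
    have := Complex.sq_norm_sub_sq_re z
    linear_combination this / 4
  apply Complex.ext
  · simp only [sqrtNeg, sqrtIm, sq, Complex.mul_re, Complex.neg_re]
    linear_combination Real.mul_self_sqrt h1 - Real.mul_self_sqrt h2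
  · simp only [sqrtNeg, sqrtIm, sq, Complex.mul_im, Complex.neg_im]
    linear_combination -2 * h3

lemma sqrtIm_nonneg (z : ℂ) : 0 ≤ sqrtIm z := Real.sqrt_nonneg _

lemma im_div_le_sqrtIm {z : ℂ} (hz : 0 < z.im) : z.im / (2 * √‖z‖) ≤ sqrtIm z := by
  have hn : 0 < ‖z‖ := norm_pos_iff.2 (by rintro rfl; simp at hz)
  have h1 : z.re ≤ ‖z‖ := Complex.re_le_norm z
  apply Real.le_sqrt_of_sq_le
  rw [div_pow, mul_pow, Real.sq_sqrt hn.le, div_le_iff₀ (by positivity)]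
  have := Complex.sq_norm_sub_sq_re z
  nlinarith [mul_nonneg (sub_nonneg.2 h1) (sub_nonneg.2 h1)]

lemma radicand_re (α θ t : ℝ) :
    (radicand α θ t).re = Real.cos (t0 α) - Real.cos θ * t ^ α := by
  simp [radicand, Complex.exp_re]

lemma radicand_im (α θ t : ℝ) :
    (radicand α θ t).im = Real.sin (t0 α) - Real.sin θ * t ^ α := by
  simp [radicand, Complex.exp_im]

lemma continuous_radicand {α : ℝ} (hα : 0 < α) :
    Continuous fun p : ℝ × ℝ => radicand α p.1 p.2 := by
  have : Continuous fun p : ℝ × ℝ => p.2 ^ α :=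
    (Real.continuous_rpow_const hα.le).comp continuous_snd
  unfold radicand
  fun_prop

lemma norm_radicand_le (α θ : ℝ) {t : ℝ} (ht : 0 ≤ t) : ‖radicand α θ t‖ ≤ 1 + t ^ α := by
  refine (norm_sub_le _ _).trans ?_
  rw [norm_mul, mul_comm Complex.I, mul_comm Complex.I, Complex.norm_exp_ofReal_mul_I,
    Complex.norm_exp_ofReal_mul_I, Complex.norm_real, Real.norm_of_nonneg (by positivity), one_mul]

lemma t0_pos {α : ℝ} (hα : 0 < α) : 0 < t0 α := by
  unfold t0
  positivity

lemma t0_lt_pi {α : ℝ} (hα0 : 0 < α) (hα2 : α < 2) : t0 α < Real.pi := by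
  unfold t0
  rw [div_lt_iff₀ (by linarith)]
  nlinarith [Real.pi_pos]

lemma t0_lt_pi_mul {α : ℝ} (hα : 0 < α) : t0 α < Real.pi * α := by
  unfold t0
  rw [div_lt_iff₀ (by linarith)]
  nlinarith [mul_pos Real.pi_pos hα, mul_pos (mul_pos Real.pi_pos hα) hα]

lemma sin_t0_pos {α : ℝ} (hα0 : 0 < α) (hα2 : α < 2) : 0 < Real.sin (t0 α) :=
  Real.sin_pos_of_pos_of_lt_pi (t0_pos hα0) (t0_lt_pi hα0 hα2)

lemma Z0_pos {α θ : ℝ} (hα0 : 0 < α) (hα2 : α < 2) (hθ : 0 < Real.sin θ) : 0 < Z0 α θ :=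
  Real.rpow_pos_of_pos (div_pos (sin_t0_pos hα0 hα2) hθ) _

lemma sin_mul_Z0_rpow {α θ : ℝ} (hα0 : 0 < α) (hα2 : α < 2) (hθ : 0 < Real.sin θ) :
    Real.sin θ * Z0 α θ ^ α = Real.sin (t0 α) := by
  have := (div_pos (sin_t0_pos hα0 hα2) hθ).le
  rw [Z0, ← Real.rpow_mul this, one_div_mul_cancel hα0.ne', Real.rpow_one]
  field_simp

lemma radicand_im_nonneg {α θ t : ℝ} (hα0 : 0 < α) (hα2 : α < 2) (hθ : 0 < Real.sin θ)
    (ht : t ∈ Icc 0 (Z0 α θ)) : 0 ≤ (radicand α θ t).im := by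
  rw [radicand_im, ← sin_mul_Z0_rpow hα0 hα2 hθ, sub_nonneg]
  gcongr
  exacts [ht.1, ht.2]

lemma radicand_im_pos {α θ t : ℝ} (hα0 : 0 < α) (hα2 : α < 2) (hθ : 0 < Real.sin θ)
    (ht : t ∈ Ico 0 (Z0 α θ)) : 0 < (radicand α θ t).im := by
  rw [radicand_im, ← sin_mul_Z0_rpow hα0 hα2 hθ, sub_pos]
  have := Real.rpow_lt_rpow ht.1 ht.2 hα0
  gcongr

lemma radicand_zero {α : ℝ} (hα : 0 < α) (θ : ℝ) :
    radicand α θ 0 = Complex.exp (Complex.I * ((t0 α : ℝ) : ℂ)) := by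
  simp [radicand, Real.zero_rpow hα.ne']

lemma sqrtNeg_radicand_zero {α : ℝ} (hα0 : 0 < α) (hα2 : α < 2) (θ : ℝ) :
    sqrtNeg (radicand α θ 0) = -Complex.I * Complex.exp (Complex.I * ((t0 α / 2 : ℝ) : ℂ)) := by
  have hre : (radicand α θ 0).re = Real.cos (t0 α) := by
    rw [radicand_re, Real.zero_rpow hα0.ne', mul_zero, sub_zero]
  have hn : ‖radicand α θ 0‖ = 1 := by
    rw [radicand_zero hα0, mul_comm, Complex.norm_exp_ofReal_mul_I]
  have h0 := t0_pos hα0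
  have hπ := t0_lt_pi hα0 hα2
  have hs : Real.sin (t0 α / 2) = √((1 - Real.cos (t0 α)) / 2) :=
    Real.sin_half_eq_sqrt h0.le (by linarith)
  have hc : Real.cos (t0 α / 2) = √((1 + Real.cos (t0 α)) / 2) :=
    Real.cos_half (by linarith) hπ.le
  rw [mul_comm Complex.I, Complex.exp_mul_I, ← Complex.ofReal_cos, ← Complex.ofReal_sin, hs, hc]
  apply Complex.ext <;> simp [sqrtNeg, sqrtIm, hre, hn]

lemma continuous_integral_sqrtIm {α : ℝ} (hα : 0 < α) :
    Continuous fun p : ℝ × ℝ => ∫ t in (0 : ℝ)..p.2, sqrtIm (radicand α p.1 t) := by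
  refine intervalIntegral.continuous_parametric_intervalIntegral_of_continuous
    (f := fun (p : ℝ × ℝ) t => sqrtIm (radicand α p.1 t)) ?_ continuous_snd
  exact (continuous_sqrtIm.comp (continuous_radicand hα)).comp
    (f := fun q : (ℝ × ℝ) × ℝ => (q.1.1, q.2)) (by fun_prop)

lemma continuous_sqrtIm_radicand {α : ℝ} (hα : 0 < α) (θ : ℝ) :
    Continuous fun t => sqrtIm (radicand α θ t) :=
  (continuous_sqrtIm.comp (continuous_radicand hα)).comp (f := fun t => (θ, t)) (by fun_prop)

lemma re_integral_sqrtNeg {α : ℝ} (hα : 0 < α) (θ Z : ℝ) :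
    (∫ t in (0 : ℝ)..Z, sqrtNeg (radicand α θ t)).re
      = ∫ t in (0 : ℝ)..Z, sqrtIm (radicand α θ t) := by
  have hc : Continuous fun t => sqrtNeg (radicand α θ t) :=
    (continuous_sqrtNeg.comp (continuous_radicand hα)).comp (f := fun t => (θ, t)) (by fun_prop)
  exact (Complex.reCLM.intervalIntegral_comp_comm (hc.intervalIntegrable 0 Z)).symm

lemma integral_sqrtIm_pos {α θ : ℝ} (hα0 : 0 < α) (hα2 : α < 2) (hθ : 0 < Real.sin θ) :
    0 < ∫ t in (0 : ℝ)..Z0 α θ, sqrtIm (radicand α θ t) := by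
  refine intervalIntegral.intervalIntegral_pos_of_pos_on
    ((continuous_sqrtIm_radicand hα0 θ).intervalIntegrable _ _) ?_ (Z0_pos hα0 hα2 hθ)
  intro t ht
  have him := radicand_im_pos hα0 hα2 hθ ⟨ht.1.le, ht.2⟩
  have hn : 0 < ‖radicand α θ t‖ := him.trans_le (Complex.im_le_norm _)
  exact lt_of_lt_of_le (by positivity) (im_div_le_sqrtIm him)

lemma le_integral_sqrtIm {α θ : ℝ} (hα0 : 0 < α) (hα2 : α < 2) (hθ : 0 < Real.sin θ)
    (hS : 1 ≤ Real.sin (t0 α) / Real.sin θ) :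
    (1 / 2) ^ (1 / α) * (Real.sin (t0 α) / (4 * √2))
        * (Real.sin (t0 α) / Real.sin θ) ^ (1 / α - 1 / 2)
      ≤ ∫ t in (0 : ℝ)..Z0 α θ, sqrtIm (radicand α θ t) := by
  have hs := sin_t0_pos hα0 hα2
  set S := Real.sin (t0 α) / Real.sin θ with hSdef
  have hS0 : 0 < S := by linarith
  set T : ℝ := (1 / 2) ^ (1 / α) * S ^ (1 / α) with hT
  have hT0 : 0 ≤ T := by positivity
  have hTα : T ^ α = S / 2 := by
    rw [hT, ← Real.mul_rpow (by norm_num) hS0.le, ← Real.rpow_mul (by positivity),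
      one_div_mul_cancel hα0.ne', Real.rpow_one]
    ring
  have hTZ : T ≤ Z0 α θ := by
    rw [Z0, ← hSdef]
    refine mul_le_of_le_one_left (by positivity) ?_
    exact Real.rpow_le_one (by norm_num) (by norm_num) (by positivity)
  have hint := fun a b => (continuous_sqrtIm_radicand hα0 θ).intervalIntegrable (μ := volume) a b
  have hpt : ∀ t ∈ Icc (0 : ℝ) T,
      Real.sin (t0 α) / (4 * √(2 * S)) ≤ sqrtIm (radicand α θ t) := by
    intro t ht
    have htα : t ^ α ≤ S / 2 := hTα ▸ Real.rpow_le_rpow ht.1 ht.2 hα0.le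
    have him : Real.sin (t0 α) / 2 ≤ (radicand α θ t).im := by
      have h1 : Real.sin θ * t ^ α ≤ Real.sin θ * (S / 2) := by gcongr
      have h2 : Real.sin θ * (S / 2) = Real.sin (t0 α) / 2 := by
        rw [hSdef]
        field_simp
      rw [radicand_im]
      linarith
    have him0 : 0 < (radicand α θ t).im := by linarith
    have hn0 : 0 < ‖radicand α θ t‖ := him0.trans_le (Complex.im_le_norm _)
    have hn : ‖radicand α θ t‖ ≤ 2 * S := by linarith [norm_radicand_le α θ ht.1]
    refine le_trans ?_ (im_div_le_sqrtIm him0)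
    calc Real.sin (t0 α) / (4 * √(2 * S)) = Real.sin (t0 α) / 2 / (2 * √(2 * S)) := by
          field_simp
          norm_num
      _ ≤ _ := by gcongr
  calc (1 / 2) ^ (1 / α) * (Real.sin (t0 α) / (4 * √2)) * S ^ (1 / α - 1 / 2)
      = ∫ _ in (0 : ℝ)..T, Real.sin (t0 α) / (4 * √(2 * S)) := by
        rw [intervalIntegral.integral_const, smul_eq_mul, sub_zero, hT, Real.rpow_sub hS0,
          Real.sqrt_mul (by norm_num), Real.sqrt_eq_rpow S]
        field_simp
    _ ≤ ∫ t in (0 : ℝ)..T, sqrtIm (radicand α θ t) :=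
        intervalIntegral.integral_mono_on hT0 (by simp) (hint 0 T) hpt
    _ ≤ ∫ t in (0 : ℝ)..Z0 α θ, sqrtIm (radicand α θ t) :=
        intervalIntegral.integral_mono_interval le_rfl hT0 hTZ
          (Eventually.of_forall fun t => sqrtIm_nonneg _) (hint 0 _)

lemma tendsto_integral_sqrtIm_atTop {α : ℝ} (hα0 : 0 < α) (hα2 : α < 2) :
    Tendsto (fun θ => ∫ t in (0 : ℝ)..Z0 α θ, sqrtIm (radicand α θ t))
      (nhdsWithin Real.pi (Iio Real.pi)) atTop := by
  have hs := sin_t0_pos hα0 hα2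
  have hpos : ∀ᶠ θ in nhdsWithin Real.pi (Iio Real.pi), 0 < Real.sin θ := by
    filter_upwards [Ioo_mem_nhdsLT Real.pi_pos] with θ hθ
    exact Real.sin_pos_of_pos_of_lt_pi hθ.1 hθ.2
  have hsin : Tendsto Real.sin (nhdsWithin Real.pi (Iio Real.pi)) (nhdsWithin 0 (Ioi 0)) :=
    tendsto_nhdsWithin_iff.2
      ⟨(Real.sin_pi ▸ Real.continuous_sin.tendsto Real.pi).mono_left nhdsWithin_le_nhds, hpos⟩
  have hS : Tendsto (fun θ => Real.sin (t0 α) / Real.sin θ)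
      (nhdsWithin Real.pi (Iio Real.pi)) atTop := by
    simpa only [div_eq_mul_inv, Function.comp_def] using
      (tendsto_inv_nhdsGT_zero.comp hsin).const_mul_atTop hs
  have hexp : 0 < 1 / α - 1 / 2 := sub_pos.2 (one_div_lt_one_div_of_lt hα0 hα2)
  refine tendsto_atTop_mono' _ ?_
    (((tendsto_rpow_atTop hexp).comp hS).const_mul_atTop
      (show 0 < (1 / 2 : ℝ) ^ (1 / α) * (Real.sin (t0 α) / (4 * √2)) by positivity))
  filter_upwards [hpos, hS.eventually_ge_atTop 1] with θ hθ h1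
  exact le_integral_sqrtIm hα0 hα2 hθ h1

/-- if `1 ≤ α < 2`, then `ρ_α(θ) → +∞` as `θ → π⁻`; if `0 < α < 1`, then
`ρ_α(θ)` tends to a finite, strictly positive limit as `θ → (πα)⁻`; in particular `ρ_α`
takes strictly positive values on `[t₀(α), min(π, πα))`. -/
theorem stmt18 (α : ℝ) (hα0 : 0 < α) (hα2 : α < 2) (ρ : ℝ → ℝ)
    (hρ : ∀ θ ∈ Set.Ico (t0 α) (min Real.pi (Real.pi * α)), ∀ g : ℝ → ℂ,
      ContinuousOn g (Set.Icc 0 (Z0 α θ)) →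
      (∀ t ∈ Set.Icc (0 : ℝ) (Z0 α θ),
        g t ^ 2 = Complex.exp (Complex.I * (θ : ℂ)) * ((t ^ α : ℝ) : ℂ)
          - Complex.exp (Complex.I * ((t0 α : ℝ) : ℂ))) →
      g 0 = -Complex.I * Complex.exp (Complex.I * ((t0 α / 2 : ℝ) : ℂ)) →
      ρ θ = (∫ t in (0 : ℝ)..(Z0 α θ), g t).re
        - 2 * Real.sin (θ / α) * ∫ ξ in (0 : ℝ)..1, Real.sqrt (1 - ξ ^ α)) :
    (1 ≤ α → Tendsto ρ (nhdsWithin Real.pi (Set.Iio Real.pi)) atTop) ∧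
    (α < 1 → ∃ L : ℝ, 0 < L ∧
      Tendsto ρ (nhdsWithin (Real.pi * α) (Set.Iio (Real.pi * α))) (nhds L)) ∧
    (∃ θ ∈ Set.Ico (t0 α) (min Real.pi (Real.pi * α)), 0 < ρ θ) := by
  have hformula : ∀ θ ∈ Ico (t0 α) (min Real.pi (Real.pi * α)),
      ρ θ = (∫ t in (0 : ℝ)..Z0 α θ, sqrtIm (radicand α θ t))
        - 2 * Real.sin (θ / α) * ∫ ξ in (0 : ℝ)..1, Real.sqrt (1 - ξ ^ α) := by
    intro θ hθ
    have hsin : 0 < Real.sin θ := Real.sin_pos_of_pos_of_lt_pi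
      ((t0_pos hα0).trans_le hθ.1) (hθ.2.trans_le (min_le_left _ _))
    rw [← re_integral_sqrtNeg hα0]
    refine hρ θ hθ (fun t => sqrtNeg (radicand α θ t)) ?_ ?_
      (sqrtNeg_radicand_zero hα0 hα2 θ)
    · exact ((continuous_sqrtNeg.comp (continuous_radicand hα0)).comp
        (f := fun t => (θ, t)) (by fun_prop)).continuousOn
    · intro t ht
      rw [sqrtNeg_sq (radicand_im_nonneg hα0 hα2 hsin ht), radicand, neg_sub]
  have hlt : t0 α < min Real.pi (Real.pi * α) := lt_min (t0_lt_pi hα0 hα2) (t0_lt_pi_mul hα0)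
  have hmem : ∀ᶠ θ in nhdsWithin (min Real.pi (Real.pi * α)) (Iio (min Real.pi (Real.pi * α))),
      θ ∈ Ico (t0 α) (min Real.pi (Real.pi * α)) := Ico_mem_nhdsLT hlt
  have hlarge : 1 ≤ α → Tendsto ρ (nhdsWithin Real.pi (Iio Real.pi)) atTop := by
    intro hα
    rw [min_eq_left (le_mul_of_one_le_right Real.pi_pos.le hα)] at hmem hformula
    set J := ∫ ξ in (0 : ℝ)..1, Real.sqrt (1 - ξ ^ α)
    refine tendsto_atTop_mono' _ ?_
      (tendsto_atTop_add_const_right _ (-(2 * |J|)) (tendsto_integral_sqrtIm_atTop hα0 hα2))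
    filter_upwards [hmem] with θ hθ
    rw [hformula θ hθ]
    have h1 : Real.sin (θ / α) * J ≤ |J| := by
      refine (le_abs_self _).trans ?_
      rw [abs_mul]
      exact mul_le_of_le_one_left (abs_nonneg _) (Real.abs_sin_le_one _)
    linarith
  have hsmall : α < 1 → ∃ L : ℝ, 0 < L ∧
      Tendsto ρ (nhdsWithin (Real.pi * α) (Iio (Real.pi * α))) (nhds L) := by
    intro hα
    have hπα : Real.pi * α < Real.pi := mul_lt_of_lt_one_right Real.pi_pos hα
    rw [min_eq_right hπα.le] at hmem hformula
    have hsin : 0 < Real.sin (Real.pi * α) :=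
      Real.sin_pos_of_pos_of_lt_pi (mul_pos Real.pi_pos hα0) hπα
    have hZ : ContinuousAt (Z0 α) (Real.pi * α) := by
      unfold Z0
      refine ContinuousAt.rpow_const (by fun_prop (disch := exact hsin.ne')) (Or.inr ?_)
      positivity
    have hI : ContinuousAt (fun θ => ∫ t in (0 : ℝ)..Z0 α θ, sqrtIm (radicand α θ t))
        (Real.pi * α) :=
      (continuous_integral_sqrtIm hα0).continuousAt.comp (f := fun θ => (θ, Z0 α θ))
        (continuousAt_id.prodMk hZ)
    refine ⟨_, integral_sqrtIm_pos hα0 hα2 hsin, ?_⟩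
    have hJ : ContinuousAt (fun θ => (∫ t in (0 : ℝ)..Z0 α θ, sqrtIm (radicand α θ t))
        - 2 * Real.sin (θ / α) * ∫ ξ in (0 : ℝ)..1, Real.sqrt (1 - ξ ^ α)) (Real.pi * α) :=
      hI.sub (by fun_prop)
    have hlim := hJ.tendsto.mono_left (nhdsWithin_le_nhds (s := Iio (Real.pi * α)))
    rw [mul_div_cancel_right₀ _ hα0.ne', Real.sin_pi, mul_zero, zero_mul, sub_zero] at hlim
    refine hlim.congr' ?_
    filter_upwards [hmem] with θ hθ
    exact (hformula θ hθ).symm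
  refine ⟨hlarge, hsmall, ?_⟩
  have hpos : ∀ᶠ θ in nhdsWithin (min Real.pi (Real.pi * α)) (Iio (min Real.pi (Real.pi * α))),
      0 < ρ θ := by
    rcases le_or_gt 1 α with hα | hα
    · rw [min_eq_left (le_mul_of_one_le_right Real.pi_pos.le hα)]
      exact (hlarge hα).eventually_gt_atTop 0
    · rw [min_eq_right (mul_le_of_le_one_right Real.pi_pos.le hα.le)]
      obtain ⟨L, hL, hlim⟩ := hsmall hα
      exact hlim.eventually_const_lt hL
  exact (hmem.and hpos).exists
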